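/- arXiv:2307.06595 — 2 statements merged into one kernel-verified Lean document; each statement's English description precedes it below -/
import Mathlib

section
/- Let 𝒞 ⊆ 𝕄 be a sum-rank metric code. Then dim(𝒞) ≤ max over C = (C_1,...,C_t) ∈ 𝒞 of Σ_{i=1}^t m_i · rank(C_i). In particular, if m_1 = ... = m_t = m, then dim(𝒞) ≤ m · maxsrk(𝒞). -/
open Module

variable {F : Type*} [Field F] [Fintype F] {t : ℕ} {m n : Fin t → ℕ}

/-- The sum-rank weight of an element of `𝕄 = F^{m 0 × n 0} × ⋯ × F^{m (t-1) × n (t-1)}`. -/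
noncomputable def srk (C : ∀ i : Fin t, Matrix (Fin (m i)) (Fin (n i)) F) : ℕ :=
  ∑ i, (C i).rank

/-- The maximum sum-rank of a code. -/
noncomputable def maxsrk (𝒞 : Submodule F (∀ i : Fin t, Matrix (Fin (m i)) (Fin (n i)) F)) : ℕ :=
  sSup {w | ∃ C ∈ 𝒞, srk C = w}

/-- The minimum distance of a code. -/
noncomputable def minDist (𝒞 : Submodule F (∀ i : Fin t, Matrix (Fin (m i)) (Fin (n i)) F)) : ℕ :=
  sInf {w | ∃ C ∈ 𝒞, C ≠ 0 ∧ srk C = w}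

/-- The maximum rank of a subspace of a matrix space. -/
noncomputable def maxrank {a b : ℕ} (𝒜 : Submodule F (Matrix (Fin a) (Fin b) F)) : ℕ :=
  sSup {w | ∃ A ∈ 𝒜, A.rank = w}

/-- Optimal anticodes in a single matrix space. -/
def IsOptAnticode {a b : ℕ} (𝒜 : Submodule F (Matrix (Fin a) (Fin b) F)) : Prop :=
  Module.finrank F 𝒜 = a * maxrank 𝒜

/-- The weight of a sum-rank metric code: the minimum of `maxsrk` over products of
optimal anticodes containing it. -/
noncomputable def codeWt (𝒞 : Submodule F (∀ i : Fin t, Matrix (Fin (m i)) (Fin (n i)) F)) : ℕ :=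
  sInf {w | ∃ 𝒜 : ∀ i : Fin t, Submodule F (Matrix (Fin (m i)) (Fin (n i)) F),
    (∀ i, IsOptAnticode (𝒜 i)) ∧ 𝒞 ≤ Submodule.pi Set.univ 𝒜 ∧
      maxsrk (Submodule.pi Set.univ 𝒜) = w}

/-- The `r`-th generalized sum-rank weight of a code. -/
noncomputable def gw (𝒞 : Submodule F (∀ i : Fin t, Matrix (Fin (m i)) (Fin (n i)) F))
    (r : ℕ) : ℕ :=
  sInf {w | ∃ 𝒟 : Submodule F (∀ i : Fin t, Matrix (Fin (m i)) (Fin (n i)) F),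
    𝒟 ≤ 𝒞 ∧ r ≤ Module.finrank F 𝒟 ∧ codeWt 𝒟 = w}

/-- Every set of cells of an `a × b` board with `b ≤ a` contains a partial matching of size at
least `|P| / a`: use the cyclic diagonals. -/
lemma exists_diag {a b : ℕ} (hab : b ≤ a) (P : Finset (Fin a × Fin b)) :
    ∃ S ⊆ P, P.card ≤ a * S.card ∧ (∀ p ∈ S, ∀ q ∈ S, p.1 = q.1 → p = q) ∧
      (∀ p ∈ S, ∀ q ∈ S, p.2 = q.2 → p = q) := by
  classical
  rcases P.eq_empty_or_nonempty with rfl | ⟨p0, hp0⟩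
  · exact ⟨∅, by simp, by simp, by simp, by simp⟩
  have ha : 0 < a := p0.1.pos
  let col : Fin a × Fin b → ℕ := fun p => (p.1.val + p.2.val) % a
  obtain ⟨c, hc, hmax⟩ := Finset.exists_max_image (Finset.range a)
    (fun c => (P.filter (fun p => col p = c)).card) ⟨0, by simpa using ha⟩
  refine ⟨P.filter (fun p => col p = c), Finset.filter_subset _ _, ?_, ?_, ?_⟩
  · have h := Finset.card_eq_sum_card_fiberwise (s := P) (t := Finset.range a) (f := col)
      (fun p _ => by simpa [col] using Nat.mod_lt _ ha)
    rw [h]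
    refine (Finset.sum_le_card_nsmul _ _ _ hmax).trans ?_
    simp
  · rintro ⟨p1, p2⟩ hp ⟨q1, q2⟩ hq h
    simp only [Finset.mem_filter, col] at hp hq h
    subst h
    have h1 : p1.val + p2.val ≡ p1.val + q2.val [MOD a] := hp.2.trans hq.2.symm
    have h2 := Nat.ModEq.add_left_cancel' _ h1
    have h3 := Nat.ModEq.eq_of_lt_of_lt h2 (p2.2.trans_le hab) (q2.2.trans_le hab)
    rw [Fin.ext h3]
  · rintro ⟨p1, p2⟩ hp ⟨q1, q2⟩ hq h
    simp only [Finset.mem_filter, col] at hp hq h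
    subst h
    have h1 : p1.val + p2.val ≡ q1.val + p2.val [MOD a] := hp.2.trans hq.2.symm
    have h2 := Nat.ModEq.add_right_cancel' _ h1
    have h3 := Nat.ModEq.eq_of_lt_of_lt h2 p1.2 q1.2
    rw [Fin.ext h3]

/-- Greedy choice of a combination of the `A s` with nonzero minor. -/
lemma exists_det_ne_zero {k K W α : Type*} [Field k] [Fintype K] [DecidableEq K]
    [AddCommGroup W] [Module k W] [LinearOrder α] (𝒞 : Submodule k W)
    (R : W →ₗ[k] Matrix K K k) (A : K → W) (hA : ∀ s, A s ∈ 𝒞) (f : K → α)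
    (h0 : ∀ s s', s ≠ s' → f s ≤ f s' → R (A s') s = 0)
    (hdet : Matrix.det (Matrix.of fun s => R (A s) s) ≠ 0) :
    ∃ C ∈ 𝒞, (R C).det ≠ 0 := by
  have key : ∀ T : Finset K, ∃ C ∈ 𝒞,
      Matrix.det (Matrix.of fun s => if s ∈ T then R C s else R (A s) s) ≠ 0 := by
    intro T
    induction T using Finset.induction_on_max_value f with
    | empty => exact ⟨0, 𝒞.zero_mem, by simpa using hdet⟩
    | insert a T ha hmax ih =>
      obtain ⟨C, hC, hd⟩ := ih
      set M : Matrix K K k := Matrix.of fun s => if s ∈ T then R C s else R (A s) s with hM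
      have e1 : (Matrix.of fun s => if s ∈ insert a T then R C s else R (A s) s)
          = M.updateRow a (R C a) := by
        ext s j
        by_cases h : s = a
        · subst h; simp
        · simp [Matrix.updateRow_ne h, hM, h]
      have e2 : (Matrix.of fun s => if s ∈ insert a T then R (C + A a) s else R (A s) s)
          = M.updateRow a (R C a + M a) := by
        ext s j
        by_cases h : s = a
        · subst h; simp [hM, ha]
        · by_cases hs : s ∈ T
          · have := h0 s a h (hmax s hs)
            simp [Matrix.updateRow_ne h, hM, hs, this]
          · simp [Matrix.updateRow_ne h, hM, hs, h]
      by_cases hz : (M.updateRow a (R C a)).det = 0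
      · refine ⟨C + A a, 𝒞.add_mem hC (hA a), ?_⟩
        rw [e2, Matrix.det_updateRow_add, hz, zero_add, Matrix.updateRow_eq_self]
        exact hd
      · exact ⟨C, hC, by rw [e1]; exact hz⟩
  obtain ⟨C, hC, h⟩ := key Finset.univ
  simp only [Finset.mem_univ, if_true] at h
  exact ⟨C, hC, h⟩

lemma det_ne_zero_of_triangular {k K α : Type*} [Field k] [Fintype K] [DecidableEq K]
    [LinearOrder α] (g : K → α) (hg : Function.Injective g) (M : Matrix K K k)
    (hM : ∀ s s', g s' < g s → M s s' = 0) (hd : ∀ s, M s s ≠ 0) : M.det ≠ 0 := by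
  let _ : LinearOrder K := LinearOrder.lift' g hg
  have h : M.BlockTriangular id := fun i j hij => hM i j hij
  have := Matrix.det_of_isUpperTriangular h
  rw [show M.det = ∏ i, M i i by convert this]
  exact Finset.prod_ne_zero_iff.mpr fun i _ => hd i

/-- Lexicographic position of an entry. -/
def posKey {t : ℕ} {m n : Fin t → ℕ} (p : Σ i : Fin t, Fin (m i) × Fin (n i)) : ℕ ×ₗ (ℕ ×ₗ ℕ) :=
  toLex (p.1.val, toLex (p.2.1.val, p.2.2.val))

lemma posKey_injective {t : ℕ} {m n : Fin t → ℕ} :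
    Function.Injective (posKey (m := m) (n := n)) := by
  rintro ⟨i, a, b⟩ ⟨j, c, d⟩ h
  simp only [posKey, EmbeddingLike.apply_eq_iff_eq, Prod.mk.injEq] at h
  obtain ⟨h1, h2, h3⟩ := h
  obtain rfl := Fin.ext h1
  rw [Fin.ext h2, Fin.ext h3]

def IsLead {k : Type*} [Field k] {t : ℕ} {m n : Fin t → ℕ}
    (C : ∀ i : Fin t, Matrix (Fin (m i)) (Fin (n i)) k)
    (p : Σ i : Fin t, Fin (m i) × Fin (n i)) : Prop :=
  C p.1 p.2.1 p.2.2 ≠ 0 ∧ ∀ q : Σ i : Fin t, Fin (m i) × Fin (n i),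
    posKey q < posKey p → C q.1 q.2.1 q.2.2 = 0

lemma exists_lead {k : Type*} [Field k] {t : ℕ} {m n : Fin t → ℕ}
    (C : ∀ i : Fin t, Matrix (Fin (m i)) (Fin (n i)) k) (hC : C ≠ 0) :
    ∃ p, IsLead C p := by
  classical
  have hne : (Finset.univ.filter fun p : Σ i : Fin t, Fin (m i) × Fin (n i) =>
      C p.1 p.2.1 p.2.2 ≠ 0).Nonempty := by
    by_contra h
    rw [Finset.not_nonempty_iff_eq_empty, Finset.filter_eq_empty_iff] at h
    apply hC
    ext i a b
    simpa using h (Finset.mem_univ ⟨i, a, b⟩)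
  obtain ⟨p, hp, hmin⟩ := Finset.exists_min_image _ posKey hne
  refine ⟨p, (Finset.mem_filter.1 hp).2, fun q hq => ?_⟩
  by_contra h
  exact absurd (hmin q (by simpa using h)) (not_le.2 hq)

lemma finrank_le_leads {k : Type*} [Field k] {t : ℕ} {m n : Fin t → ℕ}
    (𝒞 : Submodule k (∀ i : Fin t, Matrix (Fin (m i)) (Fin (n i)) k))
    (P : ∀ i, Finset (Fin (m i) × Fin (n i)))
    (hP : ∀ i p, (∃ C ∈ 𝒞, IsLead C ⟨i, p⟩) → p ∈ P i) :
    Module.finrank k 𝒞 ≤ ∑ i, (P i).card := by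
  let φ : 𝒞 →ₗ[k] ((Σ i, P i) → k) :=
    { toFun := fun C s => C.1 s.1 s.2.1.1 s.2.1.2
      map_add' := fun _ _ => rfl
      map_smul' := fun _ _ => rfl }
  have hφ : Function.Injective φ := by
    rw [injective_iff_map_eq_zero]
    intro C h
    by_contra hC
    obtain ⟨⟨i, p⟩, hp⟩ := exists_lead C.1 (fun h' => hC (Subtype.ext h'))
    exact hp.1 (congrFun h ⟨i, ⟨p, hP i p ⟨C.1, C.2, hp⟩⟩⟩)
  have := LinearMap.finrank_le_finrank_of_injective hφ
  simpa using this

lemma exists_rank_ge {k : Type*} [Field k] {t : ℕ} {m n : Fin t → ℕ}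
    (𝒞 : Submodule k (∀ i : Fin t, Matrix (Fin (m i)) (Fin (n i)) k))
    (S : ∀ i, Finset (Fin (m i) × Fin (n i)))
    (hS : ∀ i, ∀ p ∈ S i, ∃ C ∈ 𝒞, IsLead C ⟨i, p⟩)
    (h1 : ∀ i, ∀ p ∈ S i, ∀ q ∈ S i, p.1 = q.1 → p = q)
    (h2 : ∀ i, ∀ p ∈ S i, ∀ q ∈ S i, p.2 = q.2 → p = q) :
    ∃ C ∈ 𝒞, ∀ i, (S i).card ≤ (C i).rank := by
  classical
  let K := Σ i, S i
  let R : (∀ i : Fin t, Matrix (Fin (m i)) (Fin (n i)) k) →ₗ[k] Matrix K K k :=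
    { toFun := fun C => (Matrix.blockDiagonal' C).submatrix
        (fun s : K => ⟨s.1, s.2.1.1⟩) (fun s : K => ⟨s.1, s.2.1.2⟩)
      map_add' := fun C D => by rw [Matrix.blockDiagonal'_add]; rfl
      map_smul' := fun c D => by rw [Matrix.blockDiagonal'_smul]; rfl }
  have Req : ∀ C i (p q : S i), R C ⟨i, p⟩ ⟨i, q⟩ = C i p.1.1 q.1.2 := fun C i p q =>
    Matrix.blockDiagonal'_apply_eq C i p.1.1 q.1.2
  have Rne : ∀ C i j (p : S i) (q : S j), i ≠ j → R C ⟨i, p⟩ ⟨j, q⟩ = 0 := fun C i j p q h =>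
    Matrix.blockDiagonal'_apply_ne C p.1.1 q.1.2 h
  choose A hA hlead using fun s : K => hS s.1 s.2.1 s.2.2
  let f : K → ℕ ×ₗ ℕ := fun s => toLex (s.1.val, s.2.1.1.val)
  let g : K → ℕ ×ₗ ℕ := fun s => toLex (s.1.val, s.2.1.2.val)
  have hg : Function.Injective g := by
    rintro ⟨i, p⟩ ⟨j, q⟩ h
    simp only [g, EmbeddingLike.apply_eq_iff_eq, Prod.mk.injEq] at h
    obtain ⟨ha, hb⟩ := h
    obtain rfl := Fin.ext ha
    rw [Subtype.ext (h2 i p.1 p.2 q.1 q.2 (Fin.ext hb))]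
  have h0 : ∀ s s', s ≠ s' → f s ≤ f s' → R (A s') s = 0 := by
    rintro ⟨i, p⟩ ⟨j, q⟩ hne hle
    ext ⟨l, r⟩
    by_cases hil : i = l
    · subst hil
      rw [Req]
      refine (hlead ⟨j, q⟩).2 ⟨i, p.1.1, r.1.2⟩ ?_
      simp only [f, Prod.Lex.le_iff, ofLex_toLex] at hle
      simp only [posKey, Prod.Lex.lt_iff, ofLex_toLex]
      rcases hle with h | ⟨h, h'⟩
      · exact Or.inl h
      · refine Or.inr ⟨h, Or.inl (lt_of_le_of_ne h' fun h'' => hne ?_)⟩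
        obtain rfl := Fin.ext h
        rw [Subtype.ext (h1 i p.1 p.2 q.1 q.2 (Fin.ext h''))]
    · exact Rne _ _ _ _ _ hil
  have hdet : Matrix.det (Matrix.of fun s => R (A s) s) ≠ 0 := by
    refine det_ne_zero_of_triangular g hg _ ?_ ?_
    · rintro ⟨i, p⟩ ⟨j, q⟩ hlt
      simp only [Matrix.of_apply]
      by_cases hij : i = j
      · subst hij
        rw [Req]
        refine (hlead ⟨i, p⟩).2 ⟨i, p.1.1, q.1.2⟩ ?_
        simp only [g, Prod.Lex.lt_iff, ofLex_toLex] at hlt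
        simp only [posKey, Prod.Lex.lt_iff, ofLex_toLex]
        rcases hlt with h | ⟨h, h'⟩
        · exact Or.inl h
        · exact Or.inr ⟨by simp, Or.inr ⟨by simp, h'⟩⟩
      · exact Rne _ _ _ _ _ hij
    · rintro ⟨i, p⟩
      simp only [Matrix.of_apply]
      rw [Req]
      exact (hlead ⟨i, p⟩).1
  obtain ⟨C, hC, hd⟩ := exists_det_ne_zero 𝒞 R A hA f h0 hdet
  refine ⟨C, hC, fun i => ?_⟩
  have hli : LinearIndependent k (R C).row :=
    Matrix.linearIndependent_rows_of_det_ne_zero hd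
  have hli2 := hli.comp (fun p : S i => (⟨i, p⟩ : K))
    (fun p q hpq => by simpa [K] using hpq)
  let L : (Fin (n i) → k) →ₗ[k] (K → k) :=
    { toFun := fun y s => if h : s.1 = i then y (h ▸ s.2.1.2) else 0
      map_add' := fun x y => by ext s; by_cases h : s.1 = i <;> simp [h]
      map_smul' := fun x y => by ext s; by_cases h : s.1 = i <;> simp [h] }
  have hL : (R C).row ∘ (fun p : S i => (⟨i, p⟩ : K)) = L ∘ fun p : S i => C i p.1.1 := by
    funext p
    ext ⟨j, q⟩
    by_cases h : i = j
    · subst h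
      refine (Req C i p q).trans ?_
      simp [L]
    · have h' : ¬ j = i := fun e => h e.symm
      refine (Rne C i j p q h).trans ?_
      simp [L, h']
  rw [hL] at hli2
  have hli3 : LinearIndependent k (fun p : S i => C i p.1.1) := LinearIndependent.of_comp L hli2
  have hcard := finrank_span_eq_card hli3
  rw [Matrix.rank_eq_finrank_span_row]
  have : (S i).card = Fintype.card (S i) := by simp
  rw [this, ← hcard]
  apply Submodule.finrank_mono
  apply Submodule.span_mono
  rintro _ ⟨p, rfl⟩
  exact ⟨p.1.1, rfl⟩

lemma anticode_exists {k : Type*} [Field k] {t : ℕ} {m n : Fin t → ℕ} (hmn : ∀ i, n i ≤ m i)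
    (𝒞 : Submodule k (∀ i : Fin t, Matrix (Fin (m i)) (Fin (n i)) k)) :
    ∃ C ∈ 𝒞, Module.finrank k 𝒞 ≤ ∑ i, m i * (C i).rank := by
  classical
  let P : ∀ i, Finset (Fin (m i) × Fin (n i)) := fun i =>
    Finset.univ.filter fun p => ∃ C ∈ 𝒞, IsLead C ⟨i, p⟩
  choose S hSP hcard h1 h2 using fun i => exists_diag (hmn i) (P i)
  obtain ⟨C, hC, hr⟩ := exists_rank_ge 𝒞 S
    (fun i p hp => (Finset.mem_filter.1 (hSP i hp)).2) h1 h2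
  refine ⟨C, hC, (finrank_le_leads 𝒞 P fun i p h => by simpa [P] using h).trans ?_⟩
  exact Finset.sum_le_sum fun i _ => (hcard i).trans (Nat.mul_le_mul_left _ (hr i))

/-- **Anticode Bound.** The dimension of a sum-rank metric code `𝒞 ⊆ 𝕄` is at most
the maximum over `C ∈ 𝒞` of `∑ i, m i * rank (C i)`; in particular, if all `m i` are
equal to `m₀`, then `dim 𝒞 ≤ m₀ * maxsrk 𝒞`. -/
theorem anticode_bound (ht : 0 < t)
    (hm_mono : ∀ i j : Fin t, i ≤ j → m j ≤ m i)
    (hn_pos : ∀ i, 0 < n i) (hmn : ∀ i, n i ≤ m i)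
    (𝒞 : Submodule F (∀ i : Fin t, Matrix (Fin (m i)) (Fin (n i)) F)) :
    Module.finrank F 𝒞 ≤ sSup {w | ∃ C ∈ 𝒞, ∑ i, m i * (C i).rank = w} ∧
    ∀ m₀ : ℕ, (∀ i, m i = m₀) → Module.finrank F 𝒞 ≤ m₀ * maxsrk 𝒞 := by
  obtain ⟨C, hC, h⟩ := anticode_exists hmn 𝒞
  have hrk : ∀ (D : ∀ i : Fin t, Matrix (Fin (m i)) (Fin (n i)) F) i, (D i).rank ≤ n i :=
    fun D i => by simpa using (D i).rank_le_card_width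
  refine ⟨h.trans (le_csSup ⟨∑ i, m i * n i, ?_⟩ ⟨C, hC, rfl⟩), fun m₀ hm₀ => ?_⟩
  · rintro _ ⟨D, _, rfl⟩
    exact Finset.sum_le_sum fun i _ => Nat.mul_le_mul_left _ (hrk D i)
  · have hle : srk C ≤ maxsrk 𝒞 := by
      refine le_csSup ⟨∑ i, n i, ?_⟩ ⟨C, hC, rfl⟩
      rintro _ ⟨D, _, rfl⟩
      exact Finset.sum_le_sum fun i _ => hrk D i
    refine h.trans (le_trans (le_of_eq ?_) (Nat.mul_le_mul_left m₀ hle))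
    rw [srk, Finset.mul_sum]
    exact Finset.sum_congr rfl fun i _ => congrArg (· * (C i).rank) (hm₀ i)
end

section
/- Let 𝒞 ⊆ 𝕄 be a sum-rank metric code, let j ∈ [t], and let r ∈ [dim(𝒞) − m_j]. If d_{r+m_j}(𝒞) > n_1 + ... + n_{j−1}, then d_{r+m_j}(𝒞) ≥ d_r(𝒞) + 1. -/
open Module

variable {F : Type*} [Field F] [Fintype F] {t : ℕ} {m n : Fin t → ℕ}

section aux

set_option linter.unusedSectionVars false

variable {K E : Type*} [Field K] [AddCommGroup E] [Module K E] [FiniteDimensional K E] {a : ℕ}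

theorem aux_finrank_map {M N : Type*} [AddCommGroup M] [Module K M] [FiniteDimensional K M]
    [AddCommGroup N] [Module K N] (f : M →ₗ[K] N) (p : Submodule K M) :
    finrank K (p.map f) + finrank K (p ⊓ LinearMap.ker f : Submodule K M) = finrank K p := by
  have h := LinearMap.finrank_range_add_finrank_ker (f.domRestrict p)
  rw [LinearMap.range_domRestrict] at h
  have h2 : finrank K (LinearMap.ker (f.domRestrict p)) =
      finrank K (p ⊓ LinearMap.ker f : Submodule K M) := by
    have e1 : (LinearMap.ker (f.domRestrict p)).map p.subtype = p ⊓ LinearMap.ker f := by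
      ext x
      simp [LinearMap.mem_ker, and_comm]
    rw [← e1]
    exact (LinearEquiv.finrank_eq (Submodule.equivMapOfInjective p.subtype
      p.injective_subtype _))
  rw [← h2, h]

theorem aux_span_card {ι : Type*} (w : ι → E) (S : Finset ι) :
    finrank K (Submodule.span K (w '' (S : Set ι))) ≤ S.card := by
  classical
  rw [← Finset.coe_image]
  exact (finrank_span_finset_le_card _).trans Finset.card_image_le

theorem aux_exists_notMem (W U : Submodule K E) (h : finrank K U < finrank K W) :
    ∃ x ∈ W, x ∉ U := by
  by_contra hc
  push Not at hc
  exact absurd (Submodule.finrank_mono (show W ≤ U from hc)) (not_le.2 h)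

theorem aux_greedy {ι : Type*} [DecidableEq ι] (W : ι → Submodule K E) (S0 : Finset ι)
    (w0 : ι → E) (h0 : LinearIndepOn K w0 (S0 : Set ι)) (hw0 : ∀ i ∈ S0, w0 i ∈ W i) (s : ℕ) :
    ∀ I : Finset ι, Disjoint I S0 →
    (∀ e < s, s ≤ e + (I.filter (fun i => e + S0.card < finrank K (W i))).card) →
    ∃ S ⊆ I, S.card = s ∧ ∃ w : ι → E, (∀ i ∈ S0, w i = w0 i) ∧ (∀ i ∈ S0 ∪ S, w i ∈ W i) ∧
      LinearIndepOn K w ((S0 ∪ S : Finset ι) : Set ι) := by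
  induction s with
  | zero =>
    intro I _ _
    refine ⟨∅, by simp, by simp, w0, by simp, by simpa using hw0, by simpa using h0⟩
  | succ s ih =>
    intro I hI hc
    have h1 := hc s (by omega)
    obtain ⟨i, hi⟩ := Finset.card_pos.1 (show 0 < (I.filter
      (fun i => s + S0.card < finrank K (W i))).card by omega)
    rw [Finset.mem_filter] at hi
    obtain ⟨S, hSI, hS, w, hw1, hw2, hw3⟩ := ih (I.erase i)
      (hI.mono_left (Finset.erase_subset _ _)) (by
        intro e he
        have h2 := hc e (by omega)
        rw [Finset.filter_erase]
        have := Finset.pred_card_le_card_erase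
          (s := I.filter (fun i => e + S0.card < finrank K (W i))) (a := i)
        omega)
    have hiS : i ∉ S := fun h => by simpa using hSI h
    have hiS0 : i ∉ S0 := Finset.disjoint_left.1 hI hi.1
    obtain ⟨x, hxW, hx⟩ := aux_exists_notMem (W i)
      (Submodule.span K (w '' ((S0 ∪ S : Finset ι) : Set ι))) (by
        have := aux_span_card (K := K) w (S0 ∪ S)
        have := Finset.card_union_le S0 S
        omega)
    have hiU : i ∉ S0 ∪ S := by simp [hiS, hiS0]
    have hne : ∀ l ∈ S0 ∪ S, Function.update w i x l = w l := by
      intro l hl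
      rw [Function.update_of_ne]
      rintro rfl
      exact hiU hl
    refine ⟨insert i S, ?_, ?_, Function.update w i x, ?_, ?_, ?_⟩
    · intro l hl
      rw [Finset.mem_insert] at hl
      rcases hl with rfl | hl
      · exact hi.1
      · exact Finset.mem_of_mem_erase (hSI hl)
    · rw [Finset.card_insert_of_notMem hiS, hS]
    · intro l hl
      rw [hne l (Finset.mem_union_left _ hl), hw1 l hl]
    · intro l hl
      rw [Finset.union_insert, Finset.mem_insert] at hl
      rcases hl with rfl | hl
      · simpa using hxW
      · rw [hne l hl]; exact hw2 l hl
    · rw [Finset.union_insert, Finset.coe_insert, linearIndepOn_insert (by exact_mod_cast hiU)]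
      have heq : Set.EqOn w (Function.update w i x) ((S0 ∪ S : Finset ι) : Set ι) :=
        fun l hl => (hne l hl).symm
      refine ⟨hw3.congr heq, ?_⟩
      rw [← heq.image_eq]
      simpa using hx

/-- Bounded row rank. -/
def RB (V : Submodule K (Fin a → E)) (k : ℕ) : Prop :=
  ∀ A ∈ V, ∀ S : Finset (Fin a), LinearIndepOn K A (S : Set (Fin a)) → S.card ≤ k

/-- The elements of `V` whose first `l` rows (in the order `σ`) vanish. -/
def Vlow (V : Submodule K (Fin a → E)) (σ : Equiv.Perm (Fin a)) (l : ℕ) :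
    Submodule K (Fin a → E) where
  carrier := {A | A ∈ V ∧ ∀ i, (σ i : ℕ) < l → A i = 0}
  zero_mem' := ⟨V.zero_mem, fun _ _ => rfl⟩
  add_mem' := fun {A B} hA hB => ⟨V.add_mem hA.1 hB.1, fun i hi => by
    rw [Pi.add_apply, hA.2 i hi, hB.2 i hi, add_zero]⟩
  smul_mem' := fun c A hA => ⟨V.smul_mem c hA.1, fun i hi => by
    rw [Pi.smul_apply, hA.2 i hi, smul_zero]⟩

/-- The leading row spaces. -/
def FW (V : Submodule K (Fin a → E)) (σ : Equiv.Perm (Fin a)) (i : Fin a) : Submodule K E :=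
  (Vlow V σ (σ i)).map (LinearMap.proj i)

theorem FW_sum (V : Submodule K (Fin a → E)) (σ : Equiv.Perm (Fin a)) :
    ∑ i, finrank K (FW V σ i) = finrank K V := by
  have key : ∀ l : ℕ, l ≤ a → ∑ x ∈ Finset.univ.filter (fun x : Fin a => (x : ℕ) < l),
      finrank K (FW V σ (σ.symm x)) + finrank K (Vlow V σ l) = finrank K V := by
    intro l
    induction l with
    | zero =>
      intro _
      have : Vlow V σ 0 = V := by
        ext A
        exact ⟨fun h => h.1, fun h => ⟨h, fun i hi => absurd hi (Nat.not_lt_zero _)⟩⟩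
      rw [this]
      simp
    | succ l ih =>
      intro hl
      have h1 := ih (by omega)
      have h2 : Finset.univ.filter (fun x : Fin a => (x : ℕ) < l + 1) =
          insert ⟨l, hl⟩ (Finset.univ.filter (fun x : Fin a => (x : ℕ) < l)) := by
        ext x
        simp [Fin.ext_iff]
        omega
      have h3 : Vlow V σ l ⊓ LinearMap.ker (LinearMap.proj (σ.symm ⟨l, hl⟩) :
          (Fin a → E) →ₗ[K] E) = Vlow V σ (l + 1) := by
        ext A
        constructor
        · rintro ⟨hA, hA2⟩
          refine ⟨hA.1, fun i hi => ?_⟩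
          rcases Nat.lt_succ_iff_lt_or_eq.1 hi with h | h
          · exact hA.2 i h
          · have : i = σ.symm ⟨l, hl⟩ := by
              rw [Equiv.eq_symm_apply]; exact Fin.ext h
            rw [this]; exact hA2
        · rintro hA
          refine ⟨⟨hA.1, fun i hi => hA.2 i (by omega)⟩, ?_⟩
          exact hA.2 (σ.symm ⟨l, hl⟩) (by simp)
      have h4 := aux_finrank_map (LinearMap.proj (σ.symm ⟨l, hl⟩) :
          (Fin a → E) →ₗ[K] E) (Vlow V σ l)
      rw [h3] at h4
      have h5 : (Vlow V σ l).map (LinearMap.proj (σ.symm ⟨l, hl⟩) :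
          (Fin a → E) →ₗ[K] E) = FW V σ (σ.symm ⟨l, hl⟩) := by
        simp [FW]
      rw [h5] at h4
      rw [h2, Finset.sum_insert (by simp)]
      omega
  have h := key a le_rfl
  have h1 : Vlow V σ a = ⊥ := by
    rw [eq_bot_iff]
    intro A hA
    rw [Submodule.mem_bot]
    funext i
    exact hA.2 i (σ i).2
  rw [h1, finrank_bot, add_zero, Finset.filter_true_of_mem (fun x _ => x.2)] at h
  rw [← h]
  exact (Equiv.sum_comp σ.symm (fun i => finrank K (FW V σ i))).symm

theorem FW_realize (V : Submodule K (Fin a → E)) (σ : Equiv.Perm (Fin a)) (S : Finset (Fin a))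
    (w : Fin a → E) (hw : ∀ i ∈ S, w i ∈ FW V σ i) (hS : LinearIndepOn K w (S : Set (Fin a))) :
    ∃ A ∈ V, LinearIndepOn K A (S : Set (Fin a)) := by
  have key : ∀ l : ℕ, l ≤ a → ∃ A ∈ V,
      LinearIndepOn K (fun i => if (σ i : ℕ) < l then A i else w i) (S : Set (Fin a)) := by
    intro l
    induction l with
    | zero => exact fun _ => ⟨0, V.zero_mem, by simpa using hS⟩
    | succ l ih =>
      intro hl
      obtain ⟨A, hA, hI⟩ := ih (by omega)
      set p : Fin a := σ.symm ⟨l, hl⟩ with hp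
      have hσp : (σ p : ℕ) = l := by simp [hp]
      have hlt : ∀ i, i ≠ p → ((σ i : ℕ) < l + 1 ↔ (σ i : ℕ) < l) := by
        intro i hi
        have : (σ i : ℕ) ≠ l := by
          intro h
          apply hi
          apply σ.injective
          exact Fin.ext (by rw [hσp, h])
        omega
      by_cases hpS : p ∈ S
      · obtain ⟨B, hB, hBw⟩ := hw p hpS
        have hBw : B p = w p := hBw
        rw [hσp] at hB
        rw [← Finset.insert_erase hpS, Finset.coe_insert,
          linearIndepOn_insert (by simp)] at hI
        obtain ⟨hI1, hI2⟩ := hI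
        simp only [hσp, lt_irrefl, if_false] at hI2
        have fin : ∀ C ∈ V, (∀ i, (σ i : ℕ) < l → C i = A i) →
            C p ∉ Submodule.span K ((fun i => if (σ i : ℕ) < l then A i else w i) ''
              ((S.erase p : Finset (Fin a)) : Set (Fin a))) → ∃ A ∈ V,
          LinearIndepOn K (fun i => if (σ i : ℕ) < l + 1 then A i else w i)
            (S : Set (Fin a)) := by
          intro C hC hCA hCp
          refine ⟨C, hC, ?_⟩
          rw [← Finset.insert_erase hpS, Finset.coe_insert, linearIndepOn_insert (by simp)]
          have heq : Set.EqOn (fun i => if (σ i : ℕ) < l then A i else w i)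
              (fun i => if (σ i : ℕ) < l + 1 then C i else w i)
              ((S.erase p : Finset (Fin a)) : Set (Fin a)) := by
            intro i hi
            have hip : i ≠ p := Finset.ne_of_mem_erase hi
            simp only [hlt i hip]
            split_ifs with h
            · exact (hCA i h).symm
            · rfl
          refine ⟨hI1.congr heq, ?_⟩
          rw [← heq.image_eq]
          simpa [hσp] using hCp
        by_cases hAp : A p ∈ Submodule.span K ((fun i => if (σ i : ℕ) < l then A i else w i) ''
              ((S.erase p : Finset (Fin a)) : Set (Fin a)))
        · apply fin (A + B) (V.add_mem hA hB.1)
          · intro i hi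
            rw [Pi.add_apply, hB.2 i hi, add_zero]
          · intro h
            apply hI2
            rw [Pi.add_apply, hBw] at h
            exact (Submodule.add_mem_iff_right _ hAp).1 h
        · exact fin A hA (fun _ _ => rfl) hAp
      · refine ⟨A, hA, hI.congr ?_⟩
        intro i hi
        have hip : i ≠ p := by rintro rfl; exact hpS hi
        simp only [hlt i hip]
  obtain ⟨A, hA, h⟩ := key a le_rfl
  exact ⟨A, hA, by simpa using h⟩

/-- Counting consequences. -/
theorem FW_count (V : Submodule K (Fin a → E)) (k : ℕ) (hV : RB V k) (σ : Equiv.Perm (Fin a)) :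
    ∃ e ≤ k, e + (Finset.univ.filter (fun i => e < finrank K (FW V σ i))).card ≤ k := by
  by_contra hc
  push Not at hc
  obtain ⟨S, -, hS, w, -, hw, hI⟩ := aux_greedy (FW V σ) ∅ 0 (by simp) (by simp) (k + 1)
    Finset.univ (by simp) (by
      intro e he
      have := hc e (by omega)
      simp only [Finset.card_empty, add_zero]
      omega)
  rw [Finset.empty_union] at hw hI
  obtain ⟨A, hA, hAI⟩ := FW_realize V σ S w hw hI
  have := hV A hA S hAI
  omega

theorem RB_dim (V : Submodule K (Fin a → E)) (k : ℕ) (hV : RB V k) (hn : finrank K E ≤ a)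
    (hk : k ≤ finrank K E) (σ : Equiv.Perm (Fin a)) :
    finrank K V ≤ a * k ∧ (finrank K V = a * k →
      (∀ i, finrank K (FW V σ i) = k) ∨ (k < finrank K E ∧ finrank K E = a ∧
      ∃ T : Finset (Fin a), T.card = k ∧ ∀ i ∉ T, FW V σ i = ⊥)) := by
  obtain ⟨e, hek, he⟩ := FW_count V k hV σ
  set T := Finset.univ.filter (fun i => e < finrank K (FW V σ i)) with hT
  set d := finrank K E with hd
  have hTa : T.card ≤ a := by simpa using Finset.card_le_univ T
  have hsum : finrank K V ≤ T.card * d + (a - T.card) * e := by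
    rw [← FW_sum V σ, ← Finset.sum_add_sum_compl T]
    apply add_le_add
    · rw [← smul_eq_mul]
      exact Finset.sum_le_card_nsmul _ _ _ (fun i _ => Submodule.finrank_le _)
    · have : (a - T.card) = Tᶜ.card := by rw [Finset.card_compl, Fintype.card_fin]
      rw [this, ← smul_eq_mul]
      apply Finset.sum_le_card_nsmul
      intro i hi
      simpa [hT] using hi
  obtain ⟨u, hu⟩ := Nat.exists_eq_add_of_le hTa
  obtain ⟨v, hv⟩ := Nat.exists_eq_add_of_le (hek.trans hk)
  obtain ⟨x, hx⟩ := Nat.exists_eq_add_of_le he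
  obtain ⟨y, hy⟩ := Nat.exists_eq_add_of_le hn
  have hu' : a - T.card = u := by omega
  rw [hu'] at hsum
  have hident : a * k = T.card * d + u * e + (x * a + T.card * (y + e)) := by
    have h1 : T.card * d + u * e + (x * a + T.card * (y + e)) =
      T.card * (d + y) + e * (T.card + u) + x * a := by ring
    rw [h1, ← hy, ← hu, hx]
    ring
  refine ⟨by omega, fun heq => ?_⟩
  by_cases hall : ∀ i, finrank K (FW V σ i) ≤ k
  · left
    have hs : ∑ i, finrank K (FW V σ i) = ∑ _i : Fin a, k := by
      rw [FW_sum, heq]; simp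
    intro i
    exact (Finset.sum_eq_sum_iff_of_le (fun i _ => hall i)).1 hs i (Finset.mem_univ i)
  · right
    push Not at hall
    obtain ⟨i, hi⟩ := hall
    have hiT : i ∈ T := by simp [hT]; omega
    have hTpos : 0 < T.card := Finset.card_pos.2 ⟨i, hiT⟩
    have hid : finrank K (FW V σ i) ≤ d := Submodule.finrank_le _
    have ha0 : 0 < a := by omega
    have h0 : x * a + T.card * (y + e) = 0 := by omega
    have hx0 : x = 0 := by
      rcases Nat.mul_eq_zero.1 (by omega : x * a = 0) with h | h <;> omega
    have hye : y + e = 0 := by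
      rcases Nat.mul_eq_zero.1 (by omega : T.card * (y + e) = 0) with h | h <;> omega
    refine ⟨by omega, by omega, T, by omega, fun l hl => ?_⟩
    have he0 : e = 0 := by omega
    apply Submodule.finrank_eq_zero.1
    simp [hT, he0] at hl
    simpa using hl

theorem FW_vanish (V : Submodule K (Fin a → E)) (σ : Equiv.Perm (Fin a)) (T : Finset (Fin a))
    (hT : ∀ i ∉ T, FW V σ i = ⊥) (A : Fin a → E) (hA : A ∈ V) (h0 : ∀ i ∈ T, A i = 0) :
    A = 0 := by
  have key : ∀ l : ℕ, ∀ i, (σ i : ℕ) < l → A i = 0 := by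
    intro l
    induction l with
    | zero => exact fun i hi => absurd hi (Nat.not_lt_zero _)
    | succ l ih =>
      intro i hi
      by_cases hiT : i ∈ T
      · exact h0 i hiT
      · have : A i ∈ FW V σ i := ⟨A, ⟨hA, fun i' hi' => ih i' (by omega)⟩, rfl⟩
        rw [hT i hiT] at this
        simpa using this
  funext i
  exact key a i (σ i).2

theorem typeB (V : Submodule K (Fin a → E)) (k : ℕ) (hk : 1 ≤ k) (hV : RB V k)
    (hkn : k < finrank K E) (hn : finrank K E = a)
    (hdim : finrank K V = a * k) (T : Finset (Fin a)) (hTk : T.card = k)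
    (hinj : ∀ A ∈ V, (∀ i ∈ T, A i = 0) → A = 0) :
    ∃ V' ≤ V, RB V' (k - 1) ∧ a * (k - 1) ≤ finrank K V' := by
  classical
  obtain ⟨t, ht⟩ := Finset.card_pos.1 (by omega : 0 < T.card)
  -- surjectivity of the restriction to `T`
  have hsurj : ∀ x : Fin a → E, ∃ B ∈ V, ∀ i ∈ T, B i = x i := by
    let f : V →ₗ[K] (T → E) := (LinearMap.funLeft K E (fun i : T => (i : Fin a))).comp V.subtype
    have hf : Function.Injective f := by
      rw [← LinearMap.ker_eq_bot, LinearMap.ker_eq_bot']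
      intro A hA
      apply Subtype.ext
      exact hinj A A.2 (fun i hi => congrFun hA ⟨i, hi⟩)
    have hf2 : Function.Surjective f := by
      rw [← LinearMap.injective_iff_surjective_of_finrank_eq_finrank]
      · exact hf
      · rw [hdim, Module.finrank_pi_fintype]
        simp [hTk, hn, mul_comm]
    intro x
    obtain ⟨B, hB⟩ := hf2 (fun i => x i)
    exact ⟨B, B.2, fun i hi => congrFun hB ⟨i, hi⟩⟩
  -- rows off `T` lie in the span of the rows in `T`, when the latter are independent
  have hspan : ∀ B ∈ V, LinearIndepOn K B (T : Set (Fin a)) → ∀ c,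
      B c ∈ Submodule.span K (B '' (T : Set (Fin a))) := by
    intro B hB hBI c
    by_cases hc : c ∈ T
    · exact Submodule.subset_span ⟨c, hc, rfl⟩
    · by_contra hcon
      have := hV B hB (insert c T) (by
        rw [Finset.coe_insert, linearIndepOn_insert (by exact_mod_cast hc)]
        exact ⟨hBI, hcon⟩)
      rw [Finset.card_insert_of_notMem hc] at this
      omega
  have hclaim : ∀ A ∈ V, ∀ j ∈ T, (∀ i ∈ T, i ≠ j → A i = 0) → 2 ≤ k →
      ∀ c, A c ∈ Submodule.span K {A j} := by
    intro A hA j hj hA0 hk2 c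
    by_cases hy : A j = 0
    · have : A = 0 := hinj A hA (fun i hi => by
        by_cases h : i = j
        · rw [h, hy]
        · exact hA0 i hi h)
      simp [this]
    by_cases hcT : c ∈ T
    · by_cases h : c = j
      · rw [h]; exact Submodule.mem_span_singleton_self _
      · rw [hA0 c hcT h]; exact Submodule.zero_mem _
    by_contra hcon
    obtain ⟨j', hj', hjj⟩ : ∃ j' ∈ T, j' ≠ j := Finset.exists_mem_ne (by omega) j
    have hcj : c ≠ j' := by rintro rfl; exact hcT hj'
    let w0 : Fin a → E := fun i => if i = c then A c else A j
    have hw0 : LinearIndepOn K w0 (({c, j'} : Finset (Fin a)) : Set (Fin a)) := by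
      rw [Finset.coe_insert, linearIndepOn_insert (by simpa using hcj)]
      constructor
      · simp [w0, hcj.symm, hy]
      · simpa [w0, hcj.symm] using hcon
    obtain ⟨S, hSI, hS, x, hx0, -, hxI⟩ := aux_greedy (fun _ : Fin a => (⊤ : Submodule K E))
      {c, j'} w0 hw0 (by simp) (k - 1) (T.erase j') (by
        rw [Finset.disjoint_left]
        intro i hi hi2
        simp at hi hi2
        rcases hi2 with rfl | rfl
        · exact hcT hi.2
        · exact hi.1 rfl) (by
        intro e he
        rw [Finset.filter_true_of_mem]
        · rw [Finset.card_erase_of_mem hj']; omega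
        · intro i _
          rw [finrank_top, Finset.card_pair hcj]
          omega)
    have hSe : S = T.erase j' := Finset.eq_of_subset_of_card_le hSI (by
      rw [Finset.card_erase_of_mem hj']; omega)
    have hU : ({c, j'} ∪ S : Finset (Fin a)) = insert c T := by
      rw [hSe, Finset.insert_union, Finset.singleton_union, Finset.insert_erase hj']
    rw [hU, Finset.coe_insert, linearIndepOn_insert (by exact_mod_cast hcT)] at hxI
    obtain ⟨hxT, hxc⟩ := hxI
    have hxj' : x j' = A j := by
      rw [hx0 j' (by simp)]; simp [w0, hcj.symm]
    have hxc' : x c = A c := by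
      rw [hx0 c (by simp)]; simp [w0]
    obtain ⟨B, hB, hBx⟩ := hsurj x
    have heq : Set.EqOn x B (T : Set (Fin a)) := fun i hi => (hBx i hi).symm
    have h1 := hspan B hB (hxT.congr heq) c
    rw [← heq.image_eq] at h1
    have hTj : (T : Set (Fin a)) = insert j ((T.erase j : Finset (Fin a)) : Set (Fin a)) := by
      rw [← Finset.coe_insert, Finset.insert_erase hj]
    have heq2 : Set.EqOn x (B + A) ((T.erase j : Finset (Fin a)) : Set (Fin a)) := by
      intro i hi
      have hi' := Finset.mem_erase.1 hi
      rw [Pi.add_apply, hA0 i hi'.2 hi'.1, add_zero, hBx i hi'.2]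
    have hBAI : LinearIndepOn K (B + A) (T : Set (Fin a)) := by
      rw [hTj, linearIndepOn_insert (by simp)] at hxT ⊢
      refine ⟨hxT.1.congr heq2, ?_⟩
      rw [← heq2.image_eq, Pi.add_apply, hBx j hj]
      intro h
      apply hxT.2
      refine (Submodule.add_mem_iff_left _ ?_).1 h
      rw [← hxj']
      exact Submodule.subset_span ⟨j', by simp [hjj, hj'], rfl⟩
    have h2 := hspan (B + A) (V.add_mem hB hA) hBAI c
    have h3 : Submodule.span K ((B + A) '' (T : Set (Fin a))) ≤
        Submodule.span K (x '' (T : Set (Fin a))) := by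
      rw [Submodule.span_le]
      rintro _ ⟨i, hi, rfl⟩
      by_cases hij : i = j
      · rw [hij, Pi.add_apply, hBx j hj, ← hxj']
        exact Submodule.add_mem _ (Submodule.subset_span ⟨j, hj, rfl⟩)
          (Submodule.subset_span ⟨j', hj', rfl⟩)
      · rw [← heq2 (show i ∈ ((T.erase j : Finset (Fin a)) : Set (Fin a)) by
          exact Finset.mem_erase.2 ⟨hij, hi⟩)]
        exact Submodule.subset_span ⟨i, hi, rfl⟩
    apply hxc
    rw [hxc']
    exact (Submodule.add_mem_iff_right _ h1).1 (h3 h2)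
  refine ⟨V ⊓ LinearMap.ker (LinearMap.proj t : (Fin a → E) →ₗ[K] E), inf_le_left, ?_, ?_⟩
  · rintro A ⟨hA, hAt⟩ S hS
    have hAt : A t = 0 := hAt
    rcases Nat.lt_or_ge k 2 with hk2 | hk2
    · have hT1 : T = {t} := by
        obtain ⟨u, hu⟩ := Finset.card_eq_one.1 (by omega : T.card = 1)
        rw [hu] at ht ⊢
        rw [Finset.mem_singleton.1 ht]
      have : A = 0 := hinj A hA (by simp [hT1, hAt])
      rcases S.eq_empty_or_nonempty with h | ⟨i, hi⟩
      · simp [h]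
      · exact absurd (by rw [this]; rfl) (hS.ne_zero (show i ∈ (S : Set (Fin a)) from hi))
    · -- all rows lie in the span of the rows in `T.erase t`
      have hrow : ∀ c, A c ∈ Submodule.span K
          (A '' ((T.erase t : Finset (Fin a)) : Set (Fin a))) := by
        choose B hBV hB using fun j : Fin a => hsurj (Pi.single j (A j))
        have hsum : A = ∑ j ∈ T, B j := by
          rw [← sub_eq_zero]
          apply hinj _ (V.sub_mem hA (V.sum_mem (fun j _ => hBV j)))
          intro i hi
          rw [Pi.sub_apply, Finset.sum_apply, Finset.sum_eq_single i]
          · rw [hB i i hi]; simp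
          · intro j _ hji
            rw [hB j i hi, Pi.single_eq_of_ne hji.symm]
          · exact fun h => absurd hi h
        intro c
        have hc : A c = ∑ j ∈ T, B j c := by
          conv_lhs => rw [hsum]
          rw [Finset.sum_apply]
        rw [hc]
        apply Submodule.sum_mem
        intro j hj
        have hBj : B j j = A j := by rw [hB j j hj]; simp
        have h1 := hclaim (B j) (hBV j) j hj (fun i hi hij => by
          rw [hB j i hi, Pi.single_eq_of_ne hij]) hk2 c
        rw [hBj] at h1
        refine (Submodule.span_le.2 ?_) h1
        rintro _ rfl
        by_cases hjt : j = t
        · rw [hjt, hAt]; exact Submodule.zero_mem _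
        · exact Submodule.subset_span ⟨j, Finset.mem_erase.2 ⟨hjt, hj⟩, rfl⟩
      have h1 : finrank K (Submodule.span K (A '' (S : Set (Fin a)))) = S.card := by
        rw [Set.image_eq_range]
        have := finrank_span_eq_card hS
        simpa using this
      have h2 : Submodule.span K (A '' (S : Set (Fin a))) ≤
          Submodule.span K (A '' ((T.erase t : Finset (Fin a)) : Set (Fin a))) := by
        rw [Submodule.span_le]
        rintro _ ⟨i, _, rfl⟩
        exact hrow i
      have h3 := Submodule.finrank_mono h2
      have h4 := aux_span_card (K := K) A (T.erase t)
      rw [Finset.card_erase_of_mem ht] at h4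
      omega
  · have h1 := aux_finrank_map (LinearMap.proj t : (Fin a → E) →ₗ[K] E) V
    have h2 : finrank K (V.map (LinearMap.proj t : (Fin a → E) →ₗ[K] E)) ≤ finrank K E :=
      Submodule.finrank_le _
    obtain ⟨k', rfl⟩ := Nat.exists_eq_add_of_le hk
    have h3 : a * (1 + k') = a + a * k' := by ring
    have h4 : 1 + k' - 1 = k' := by omega
    rw [h4]
    omega

theorem typeA (V : Submodule K (Fin a → E)) (k : ℕ) (hk : 1 ≤ k) (hV : RB V k)
    (hkn : k ≤ finrank K E) (hn : finrank K E ≤ a)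
    (hall : ∀ (σ : Equiv.Perm (Fin a)) i, finrank K (FW V σ i) = k) :
    ∃ V' ≤ V, RB V' (k - 1) ∧ a * (k - 1) ≤ finrank K V' := by
  classical
  let L : Fin a → Submodule K E := fun i => V.comap (LinearMap.single K (fun _ => E) i)
  have hL0 : ∀ i, ∃ σ : Equiv.Perm (Fin a), FW V σ i ≤ L i := by
    intro i
    have ha : a - 1 < a := by have := i.2; omega
    let σ := Equiv.swap i ⟨a - 1, ha⟩
    refine ⟨σ, ?_⟩
    rintro _ ⟨A, hA, rfl⟩
    have hσi : σ i = ⟨a - 1, ha⟩ := Equiv.swap_apply_left _ _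
    have : Pi.single i (A i) = A := by
      funext l
      by_cases hl : l = i
      · subst hl; simp
      · rw [Pi.single_eq_of_ne hl]
        refine (hA.2 l ?_).symm
        have h1 : σ l ≠ σ i := fun h => hl (σ.injective h)
        have h2 : (σ l : ℕ) ≠ a - 1 := by
          intro h
          apply h1
          rw [hσi]
          exact Fin.ext h
        rw [hσi]
        have := (σ l).2
        simp only
        omega
    change Pi.single i (A i) ∈ V
    rw [this]
    exact hA.1
  have hLk : ∀ i, k ≤ finrank K (L i) := by
    intro i
    obtain ⟨σ, hσ⟩ := hL0 i
    rw [← hall σ i]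
    exact Submodule.finrank_mono hσ
  have hLV : ∀ w : Fin a → E, (∀ i, w i ∈ L i) → w ∈ V := by
    intro w hw
    have : w = ∑ i, Pi.single i (w i) := (Finset.univ_sum_single w).symm
    rw [this]
    exact V.sum_mem (fun i _ => hw i)
  have hno : ∀ (S : Finset (Fin a)) (w : Fin a → E), (∀ i ∈ S, w i ∈ L i) →
      LinearIndepOn K w (S : Set (Fin a)) → S.card ≤ k := by
    intro S w hw hI
    refine hV (fun i => if i ∈ S then w i else 0) (hLV _ (fun i => ?_)) S (hI.congr ?_)
    · by_cases h : i ∈ S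
      · simpa [h] using hw i h
      · simp [h]
    · intro i hi
      have : i ∈ S := hi
      simp [this]
  have hle : ∀ i j, i ≠ j → L i ≤ L j := by
    intro i j hij
    by_cases hka : a ≤ k
    · have : L j = ⊤ := Submodule.eq_top_of_finrank_eq (le_antisymm (Submodule.finrank_le _)
        (by have := hLk j; omega))
      rw [this]; exact le_top
    by_contra hcon
    obtain ⟨x, hxi, hxj⟩ := SetLike.not_le_iff_exists.1 hcon
    have hx0 : x ≠ 0 := by rintro rfl; exact hxj (Submodule.zero_mem _)
    obtain ⟨S, hSI, hS, w, hw0, hwL, hwI⟩ := aux_greedy L {i} (fun _ => x) (by simpa using hx0)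
      (by simpa using hxi) (k - 1) ((Finset.univ.erase i).erase j) (by simp) (by
        intro e he
        rw [Finset.filter_true_of_mem]
        · rw [Finset.card_erase_of_mem (by simp [hij.symm]), Finset.card_erase_of_mem (by simp)]
          simp only [Finset.card_univ, Fintype.card_fin]
          omega
        · intro l _
          have := hLk l
          rw [Finset.card_singleton]; omega)
    have hjS : j ∉ {i} ∪ S := by
      simp only [Finset.mem_union, Finset.mem_singleton, not_or]
      exact ⟨hij.symm, fun h => by simpa using hSI h⟩
    have hiS : i ∉ S := fun h => by simpa using hSI h
    have hcard : ({i} ∪ S : Finset (Fin a)).card = k := by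
      rw [Finset.singleton_union, Finset.card_insert_of_notMem hiS]; omega
    have hspan := aux_span_card (K := K) w ({i} ∪ S)
    obtain ⟨z, hzj, hz⟩ : ∃ z ∈ L j,
        z ∉ Submodule.span K (w '' (({i} ∪ S : Finset (Fin a)) : Set (Fin a))) := by
      by_contra hc
      push Not at hc
      have h1 : L j = Submodule.span K (w '' (({i} ∪ S : Finset (Fin a)) : Set (Fin a))) :=
        Submodule.eq_of_le_of_finrank_le hc (by have := hLk j; omega)
      apply hxj
      rw [h1]
      exact Submodule.subset_span ⟨i, by simp, hw0 i (by simp)⟩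
    have heq : Set.EqOn w (Function.update w j z)
        (({i} ∪ S : Finset (Fin a)) : Set (Fin a)) := by
      intro l hl
      rw [Function.update_of_ne]
      rintro rfl
      exact hjS hl
    have := hno (insert j ({i} ∪ S)) (Function.update w j z) (by
      intro l hl
      rw [Finset.mem_insert] at hl
      rcases hl with rfl | hl
      · simpa using hzj
      · rw [← heq hl]; exact hwL l hl) (by
      rw [Finset.coe_insert, linearIndepOn_insert (by exact_mod_cast hjS)]
      refine ⟨hwI.congr heq, ?_⟩
      rw [← heq.image_eq]
      simpa using hz)
    rw [Finset.card_insert_of_notMem hjS] at this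
    omega
  have ha : 0 < a := by omega
  let i0 : Fin a := ⟨0, ha⟩
  have hW : ∀ i, L i0 ≤ L i := by
    intro i
    by_cases h : i0 = i
    · rw [h]
    · exact hle _ _ h
  obtain ⟨f, hf⟩ := exists_linearIndependent_of_le_finrank
    (show k - 1 ≤ finrank K (L i0) by have := hLk i0; omega)
  let W' : Submodule K E := (Submodule.span K (Set.range f)).map (L i0).subtype
  have hW'1 : finrank K W' = k - 1 := by
    rw [← LinearEquiv.finrank_eq (Submodule.equivMapOfInjective (L i0).subtype
      (L i0).injective_subtype _), finrank_span_eq_card hf, Fintype.card_fin]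
  have hW'2 : W' ≤ L i0 := by
    rintro _ ⟨x, _, rfl⟩
    exact x.2
  refine ⟨LinearMap.range (W'.subtype.compLeft (Fin a)), ?_, ?_, ?_⟩
  · rintro _ ⟨x, rfl⟩
    exact hLV _ (fun i => hW i (hW'2 (x i).2))
  · rintro _ ⟨x, rfl⟩ S hS
    have h1 : finrank K (Submodule.span K ((W'.subtype.compLeft (Fin a)) x '' (S : Set (Fin a))))
        = S.card := by
      rw [Set.image_eq_range]
      have := finrank_span_eq_card hS
      simpa using this
    have h2 : Submodule.span K ((W'.subtype.compLeft (Fin a)) x '' (S : Set (Fin a))) ≤ W' := by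
      rw [Submodule.span_le]
      rintro _ ⟨i, _, rfl⟩
      exact (x i).2
    have h3 := Submodule.finrank_mono h2
    omega
  · rw [LinearMap.finrank_range_of_inj, Module.finrank_pi_fintype]
    · simp [hW'1]
    · intro x y hxy
      funext i
      exact Subtype.ext (congrFun hxy i)

theorem exists_sub (V : Submodule K (Fin a → E)) (k : ℕ) (hk : 1 ≤ k) (hV : RB V k)
    (hkn : k ≤ finrank K E) (hn : finrank K E ≤ a) (hdim : finrank K V = a * k) :
    ∃ V' ≤ V, RB V' (k - 1) ∧ a * (k - 1) ≤ finrank K V' := by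
  by_cases hall : ∀ (σ : Equiv.Perm (Fin a)) i, finrank K (FW V σ i) = k
  · exact typeA V k hk hV hkn hn hall
  · rw [not_forall] at hall
    obtain ⟨σ, hσ⟩ := hall
    rcases (RB_dim V k hV hn hkn σ).2 hdim with h | ⟨h1, h2, T, hT, h3⟩
    · exact absurd h hσ
    · exact typeB V k hk hV h1 h2 hdim T hT (fun A hA h0 => FW_vanish V σ T h3 A hA h0)

end aux

section matr

set_option linter.unusedSectionVars false

variable {a b : ℕ}

theorem maxrank_bdd (V : Submodule F (Matrix (Fin a) (Fin b) F)) :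
    BddAbove {w | ∃ A ∈ V, A.rank = w} := by
  refine ⟨b, ?_⟩
  rintro _ ⟨A, _, rfl⟩
  simpa using A.rank_le_card_width

theorem rank_le_maxrank (V : Submodule F (Matrix (Fin a) (Fin b) F))
    (A : Matrix (Fin a) (Fin b) F) (hA : A ∈ V) : A.rank ≤ maxrank V :=
  le_csSup (maxrank_bdd V) ⟨A, hA, rfl⟩

theorem maxrank_mem (V : Submodule F (Matrix (Fin a) (Fin b) F)) :
    ∃ A ∈ V, A.rank = maxrank V :=
  Nat.sSup_mem (s := {w | ∃ A ∈ V, A.rank = w}) ⟨_, 0, V.zero_mem, rfl⟩ (maxrank_bdd V)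

theorem maxrank_le_width (V : Submodule F (Matrix (Fin a) (Fin b) F)) : maxrank V ≤ b := by
  obtain ⟨A, _, h⟩ := maxrank_mem V
  rw [← h]
  simpa using A.rank_le_card_width

theorem maxrank_RB (V : Submodule F (Matrix (Fin a) (Fin b) F)) :
    RB (K := F) (E := Fin b → F) V (maxrank V) := by
  intro A hA S hS
  refine le_trans ?_ (rank_le_maxrank V A hA)
  refine le_trans ?_ (Matrix.rank_eq_finrank_span_row (Matrix.of A)).ge
  have h1 : finrank F (Submodule.span F (A '' (S : Set (Fin a)))) = S.card := by
    rw [Set.image_eq_range]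
    have := finrank_span_eq_card hS
    simpa using this
  rw [← h1]
  apply Submodule.finrank_mono
  apply Submodule.span_mono
  rintro _ ⟨i, _, rfl⟩
  exact ⟨i, rfl⟩

theorem maxrank_le_of_RB (V : Submodule F (Matrix (Fin a) (Fin b) F)) (k : ℕ)
    (hV : RB (K := F) (E := Fin b → F) V k) : maxrank V ≤ k := by
  classical
  obtain ⟨A, hA, h⟩ := maxrank_mem V
  rw [← h, Matrix.rank_eq_finrank_span_row]
  have h0 : LinearIndepOn F A (∅ : Set (Fin a)) := linearIndepOn_empty F A
  let S : Finset (Fin a) := (h0.extend (Set.empty_subset Set.univ)).toFinset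
  have hS : LinearIndepOn F A (S : Set (Fin a)) := by
    simpa [S] using h0.linearIndepOn_extend (Set.empty_subset Set.univ)
  refine le_trans ?_ (hV A hA S hS)
  refine le_trans ?_ (aux_span_card (K := F) (E := Fin b → F) A S)
  apply Submodule.finrank_mono
  rw [Submodule.span_le]
  rintro _ ⟨i, rfl⟩
  have h2 := h0.image_subset_span_image_extend (Set.empty_subset Set.univ)
  have h3 := h2 ⟨i, Set.mem_univ i, rfl⟩
  simpa [S, Matrix.row] using h3

theorem finrank_le_maxrank (hab : b ≤ a) (V : Submodule F (Matrix (Fin a) (Fin b) F)) :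
    finrank F V ≤ a * maxrank V :=
  (RB_dim (K := F) (E := Fin b → F) V (maxrank V) (maxrank_RB V) (by simpa using hab)
    (by simpa using maxrank_le_width V) (Equiv.refl _)).1

theorem top_opt (hab : b ≤ a) : IsOptAnticode (⊤ : Submodule F (Matrix (Fin a) (Fin b) F)) := by
  apply le_antisymm (finrank_le_maxrank hab _)
  rw [finrank_top, Module.finrank_matrix]
  simp only [Fintype.card_fin, finrank_self, mul_one]
  exact Nat.mul_le_mul_left _ (maxrank_le_width _)

theorem opt_sub (hab : b ≤ a) (V : Submodule F (Matrix (Fin a) (Fin b) F))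
    (hV : IsOptAnticode V) (hpos : 1 ≤ maxrank V) :
    ∃ V' ≤ V, IsOptAnticode V' ∧ maxrank V' + 1 ≤ maxrank V ∧
      finrank F V ≤ finrank F V' + a := by
  have hex : ∃ V' : Submodule F (Matrix (Fin a) (Fin b) F), V' ≤ V ∧
      RB (K := F) (E := Fin b → F) V' (maxrank V - 1) ∧
      a * (maxrank V - 1) ≤ finrank F V' :=
    exists_sub (K := F) (E := Fin b → F) V (maxrank V) hpos
      (maxrank_RB V) (by simpa using maxrank_le_width V) (by simpa using hab) hV
  obtain ⟨V', hle, hRB, hd⟩ := hex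
  have h1 := maxrank_le_of_RB V' _ hRB
  have h2 := finrank_le_maxrank hab V'
  have h3 : a * maxrank (V' : Submodule F (Matrix (Fin a) (Fin b) F)) ≤ a * (maxrank V - 1) :=
    Nat.mul_le_mul_left _ h1
  refine ⟨V', hle, le_antisymm h2 (h3.trans hd), by omega, ?_⟩
  have h4 : finrank F V = a * maxrank V := hV
  have h5 : a * maxrank V = a * (maxrank V - 1) + a := by
    obtain ⟨x, hx⟩ := Nat.exists_eq_add_of_le hpos
    rw [hx, Nat.add_sub_cancel_left]; ring
  omega

end matr

theorem maxsrk_pi (𝒜 : ∀ i : Fin t, Submodule F (Matrix (Fin (m i)) (Fin (n i)) F)) :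
    maxsrk (Submodule.pi Set.univ 𝒜) = ∑ i, maxrank (𝒜 i) := by
  have hub : ∀ w ∈ {w | ∃ C ∈ Submodule.pi Set.univ 𝒜, srk C = w}, w ≤ ∑ i, maxrank (𝒜 i) := by
    rintro _ ⟨C, hC, rfl⟩
    exact Finset.sum_le_sum (fun i _ => rank_le_maxrank _ _ (hC i (Set.mem_univ i)))
  apply le_antisymm
  · exact csSup_le ⟨_, 0, Submodule.zero_mem _, rfl⟩ hub
  · choose A hA hr using fun i => maxrank_mem (𝒜 i)
    exact le_csSup ⟨_, hub⟩ ⟨A, fun i _ => hA i, by simp [srk, hr]⟩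

/-- If `𝒞 ⊆ 𝕄` is a sum-rank metric code, `j ∈ [t]` and `r ∈ [dim 𝒞 - m j]`, then
`d_{r + m j}(𝒞) > n_1 + ⋯ + n_{j-1}` implies `d_{r + m j}(𝒞) ≥ d_r(𝒞) + 1`. -/
theorem gw_step_bound (ht : 0 < t)
    (hm_mono : ∀ i j : Fin t, i ≤ j → m j ≤ m i)
    (hn_pos : ∀ i, 0 < n i) (hmn : ∀ i, n i ≤ m i)
    (𝒞 : Submodule F (∀ i : Fin t, Matrix (Fin (m i)) (Fin (n i)) F))
    (j : Fin t) (r : ℕ) (hr1 : 1 ≤ r) (hr2 : r + m j ≤ Module.finrank F 𝒞)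
    (hgt : ∑ i ∈ Finset.Iio j, n i < gw 𝒞 (r + m j)) :
    gw 𝒞 r + 1 ≤ gw 𝒞 (r + m j) := by
  classical
  obtain ⟨𝒟, hDC, hDr, hDw⟩ := Nat.sInf_mem (s := {w | ∃ 𝒟 : Submodule F
    (∀ i : Fin t, Matrix (Fin (m i)) (Fin (n i)) F),
    𝒟 ≤ 𝒞 ∧ r + m j ≤ Module.finrank F 𝒟 ∧ codeWt 𝒟 = w}) ⟨_, 𝒞, le_rfl, hr2, rfl⟩
  change codeWt 𝒟 = gw 𝒞 (r + m j) at hDw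
  obtain ⟨𝒜, hopt, hDA, hAw⟩ := Nat.sInf_mem (s := {w | ∃ 𝒜 : ∀ i : Fin t,
    Submodule F (Matrix (Fin (m i)) (Fin (n i)) F),
    (∀ i, IsOptAnticode (𝒜 i)) ∧ 𝒟 ≤ Submodule.pi Set.univ 𝒜 ∧
      maxsrk (Submodule.pi Set.univ 𝒜) = w})
    ⟨_, fun _ => ⊤, fun i => top_opt (hmn i), by simp, rfl⟩
  change maxsrk (Submodule.pi Set.univ 𝒜) = codeWt 𝒟 at hAw
  rw [maxsrk_pi, hDw] at hAw
  obtain ⟨i, hji, hi⟩ : ∃ i, j ≤ i ∧ 1 ≤ maxrank (𝒜 i) := by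
    by_contra hc
    push Not at hc
    have h1 : ∑ i, maxrank (𝒜 i) = ∑ i ∈ Finset.Iio j, maxrank (𝒜 i) := by
      symm
      apply Finset.sum_subset (Finset.subset_univ _)
      intro i _ hi
      have := hc i (by simpa using hi)
      omega
    have h2 : ∑ i ∈ Finset.Iio j, maxrank (𝒜 i) ≤ ∑ i ∈ Finset.Iio j, n i :=
      Finset.sum_le_sum (fun i _ => maxrank_le_width _)
    omega
  obtain ⟨V', hle, hV'opt, hV'r, hV'd⟩ := opt_sub (hmn i) (𝒜 i) (hopt i) hi
  have hmij := hm_mono j i hji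
  let 𝒟' := 𝒟 ⊓ V'.comap (LinearMap.proj i :
    (∀ i : Fin t, Matrix (Fin (m i)) (Fin (n i)) F) →ₗ[F] _)
  have hdim : r ≤ finrank F 𝒟' := by
    have h1 := aux_finrank_map (V'.mkQ.comp (LinearMap.proj i :
      (∀ i : Fin t, Matrix (Fin (m i)) (Fin (n i)) F) →ₗ[F] _)) 𝒟
    rw [LinearMap.ker_comp, Submodule.ker_mkQ] at h1
    have h2 := aux_finrank_map V'.mkQ (𝒜 i)
    rw [Submodule.ker_mkQ, inf_eq_right.2 hle] at h2
    have h3 : 𝒟.map (V'.mkQ.comp (LinearMap.proj i :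
      (∀ i : Fin t, Matrix (Fin (m i)) (Fin (n i)) F) →ₗ[F] _)) ≤ (𝒜 i).map V'.mkQ := by
      rw [Submodule.map_comp]
      apply Submodule.map_mono
      rintro _ ⟨C, hC, rfl⟩
      exact hDA hC i (Set.mem_univ i)
    have h4 := Submodule.finrank_mono h3
    change finrank F _ + finrank F 𝒟' = _ at h1
    omega
  have hw : codeWt 𝒟' ≤ ∑ l, maxrank (Function.update 𝒜 i V' l) := by
    rw [← maxsrk_pi]
    refine Nat.sInf_le ⟨Function.update 𝒜 i V', ?_, ?_, rfl⟩
    · intro l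
      by_cases h : l = i
      · subst h; simpa using hV'opt
      · rw [Function.update_of_ne h]; exact hopt l
    · rintro C ⟨hC, hC2⟩ l _
      change C l ∈ Function.update 𝒜 i V' l
      by_cases h : l = i
      · subst h; rw [Function.update_self]; exact hC2
      · rw [Function.update_of_ne h]; exact hDA hC l (Set.mem_univ l)
  have hg : gw 𝒞 r ≤ codeWt 𝒟' :=
    Nat.sInf_le ⟨𝒟', inf_le_left.trans hDC, hdim, rfl⟩
  have hs : ∑ l, maxrank (Function.update 𝒜 i V' l) < ∑ l, maxrank (𝒜 l) := by
    apply Finset.sum_lt_sum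
    · intro l _
      by_cases h : l = i
      · subst h; rw [Function.update_self]; omega
      · rw [Function.update_of_ne h]
    · exact ⟨i, Finset.mem_univ i, by rw [Function.update_self]; omega⟩
  omega
end
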